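/- Let m = A_a b with a, b > 0, and let s ∈ [1, b+1]. Then: (1) A_a b = A_{a−1}^{sk}(A_a(b−s)) (where A_a(−1) := 1 in the case s = b+1). (2) If moreover ℓ ∈ [1, k], c := A_{a−1}^ℓ(A_a(b−s)), m ≡_k A_a b, b = ⟨m⟩₋₁, and A_{a−1}(b) ≤ c < A_a b, then c is in k-normal form as written, i.e., c ≡_k A_{a−1}(A_{a−1}^{ℓ−1}(A_a(b−s))). -/

import Mathlib

/-- The base-`k` Ackermann function `A_a(k, b)`:
`A_0(k, b) = k ^ b` and `A_{a+1}(k, b) = A_a^k(k, A_{a+1}(k, b-1))`,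
with the auxiliary value `A_{a+1}(k, -1) = 1`
(equivalently, `A_{a+1}(k, b) = (A_a^k)^[b+1] (1)`). -/
def Ack (k : ℕ) : ℕ → ℕ → ℕ
  | 0, b => k ^ b
  | a + 1, b => ((Ack k a)^[k])^[b + 1] 1

/-- `IsSandwich k m n a b ms` says that `(A_{a i}(k, b i))_{i=1}^n` is a
`k`-sandwiching sequence for `m`, with sandwiching values `(ms i)_{i=0}^n`:
`ms 0 = 0`; for each `i < n`, `A_{a (i+1)} (ms i) ≤ m < A_{a (i+1) + 1} (ms i)`,
`A_{a (i+1)} (b (i+1)) ≤ m < A_{a (i+1)} (b (i+1) + 1)`, and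
`ms (i+1) = A_{a (i+1)} (b (i+1))`; and `A_0 (ms n) > m`. -/
structure IsSandwich (k m n : ℕ) (a b ms : ℕ → ℕ) : Prop where
  ms_zero : ms 0 = 0
  idx_lo : ∀ i < n, Ack k (a (i + 1)) (ms i) ≤ m
  idx_hi : ∀ i < n, m < Ack k (a (i + 1) + 1) (ms i)
  arg_lo : ∀ i < n, Ack k (a (i + 1)) (b (i + 1)) ≤ m
  arg_hi : ∀ i < n, m < Ack k (a (i + 1)) (b (i + 1) + 1)
  ms_succ : ∀ i < n, ms (i + 1) = Ack k (a (i + 1)) (b (i + 1))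
  halt : m < Ack k 0 (ms n)

/-- `NF k m a b c` says that `m ≡_k A_a b + c`, i.e. `m` has `k`-normal form
`A_a b + c` (so `m = A_a b + c` and the `k`-sandwiching sequence of `m` ends
with the pair `(a, b)`). -/
def NF (k m a b c : ℕ) : Prop :=
  m = Ack k a b + c ∧
    ∃ n as bs ms, 1 ≤ n ∧ IsSandwich k m n as bs ms ∧ a = as n ∧ b = bs n

theorem Ack_succ_eq (k a b : ℕ) : Ack k (a + 1) b = (Ack k a)^[k * (b + 1)] 1 := by
  rw [Ack, Function.iterate_mul]

theorem Ack_props (k : ℕ) (hk : 2 ≤ k) (a : ℕ) :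
    StrictMono (Ack k a) ∧ ∀ x, x < Ack k a x := by
  induction a with
  | zero =>
    refine ⟨fun x y h => ?_, fun x => ?_⟩
    · simp only [Ack]
      exact Nat.pow_lt_pow_right (by omega) h
    · simp only [Ack]
      exact Nat.lt_pow_self (by omega)
  | succ a ih =>
    have hm : StrictMono (fun n => (Ack k a)^[n] 1) := by
      apply strictMono_nat_of_lt_succ
      intro n
      rw [Function.iterate_succ_apply']
      exact ih.2 _
    have hs : StrictMono (Ack k (a + 1)) := by
      intro x y h
      rw [Ack_succ_eq, Ack_succ_eq]
      apply hm
      exact Nat.mul_lt_mul_of_pos_left (by omega) (by omega)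
    refine ⟨hs, fun x => ?_⟩
    rw [Ack_succ_eq]
    have h1 := hm.le_apply (x := k * (x + 1))
    have h2 : x + 1 ≤ k * (x + 1) := Nat.le_mul_of_pos_left _ (by omega)
    omega

theorem stmt_11 (k a b s : ℕ) (hk : 2 ≤ k) (ha : 0 < a) (hb : 0 < b)
    (hs1 : 1 ≤ s) (hs2 : s ≤ b + 1) :
    Ack k a b = (Ack k (a - 1))^[s * k] (if s ≤ b then Ack k a (b - s) else 1) ∧
      ∀ l n : ℕ, ∀ aseq bseq ms : ℕ → ℕ,
        1 ≤ l → l ≤ k → 1 ≤ n → IsSandwich k (Ack k a b) n aseq bseq ms →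
        aseq n = a → bseq n = b → b = ms (n - 1) →
        ∀ c, c = (Ack k (a - 1))^[l] (if s ≤ b then Ack k a (b - s) else 1) →
          Ack k (a - 1) b ≤ c → c < Ack k a b →
          NF k c (a - 1)
            ((Ack k (a - 1))^[l - 1] (if s ≤ b then Ack k a (b - s) else 1)) 0 := by
  obtain ⟨a, rfl⟩ : ∃ a', a = a' + 1 := ⟨a - 1, by omega⟩
  simp only [Nat.add_sub_cancel]
  constructor
  · split_ifs with h
    · obtain ⟨d, rfl⟩ := Nat.exists_eq_add_of_le h
      rw [Nat.add_sub_cancel_left, Ack_succ_eq, Ack_succ_eq, ← Function.iterate_add_apply]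
      congr 2
      ring
    · have : s = b + 1 := by omega
      rw [this, Ack_succ_eq, Nat.mul_comm]
  · intro l n as bs ms hl _ hn hS han hbn hbm c hc hlo hhi
    generalize (if s ≤ b then Ack k (a + 1) (b - s) else 1) = x at *
    have P := Ack_props k hk
    have hcd : c = Ack k a ((Ack k a)^[l - 1] x) := by
      rw [hc, ← Function.iterate_succ_apply' (Ack k a), Nat.succ_eq_add_one, Nat.sub_add_cancel hl]
    have hstep : ∀ i < n, ms i ≤ bs (i + 1) := by
      intro i hi
      have := (P (as (i + 1))).1.lt_iff_lt.1 (lt_of_le_of_lt (hS.idx_lo i hi) (hS.arg_hi i hi))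
      omega
    have hmono : ∀ j, ∀ i, i ≤ j → j ≤ n → ms i ≤ ms j := by
      intro j
      induction j with
      | zero => intro i hi _; rw [Nat.le_zero.1 hi]
      | succ j ih =>
        intro i hi hj
        rcases Nat.lt_or_eq_of_le hi with h | h
        · have h1 := ih i (by omega) (by omega)
          have h2 := hstep j (by omega)
          have h3 := (P (as (j + 1))).2 (bs (j + 1))
          rw [← hS.ms_succ j (by omega)] at h3
          omega
        · rw [h]
    have hbc : b < c := lt_of_lt_of_le ((P a).2 b) hlo
    have hval : ∀ i, i + 1 < n → Ack k (as (i + 1)) (bs (i + 1)) ≤ c := by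
      intro i hi
      rw [← hS.ms_succ i (by omega)]
      have := hmono (n - 1) (i + 1) (by omega) (by omega)
      omega
    obtain ⟨N, rfl⟩ : ∃ N, n = N + 1 := ⟨n - 1, by omega⟩
    simp only [Nat.add_sub_cancel] at hbm
    generalize hd : (Ack k a)^[l - 1] x = d at *
    refine ⟨hcd, N + 1, Function.update as (N + 1) a, Function.update bs (N + 1) d,
      Function.update ms (N + 1) c, hn, ?_, by simp, by simp⟩
    constructor
    · simpa using hS.ms_zero
    · intro i hi
      rw [Function.update_of_ne (by omega : i ≠ N + 1)]
      rcases Nat.lt_or_eq_of_le (Nat.le_of_lt_succ hi) with h | rfl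
      · rw [Function.update_of_ne (by omega)]
        exact ((P _).1.monotone (hstep i hi)).trans (hval i (by omega))
      · rw [Function.update_self, ← hbm]; exact hlo
    · intro i hi
      rw [Function.update_of_ne (by omega : i ≠ N + 1)]
      rcases Nat.lt_or_eq_of_le (Nat.le_of_lt_succ hi) with h | rfl
      · rw [Function.update_of_ne (by omega)]
        exact hhi.trans (hS.idx_hi i hi)
      · rw [Function.update_self, ← hbm]; exact hhi
    · intro i hi
      rcases Nat.lt_or_eq_of_le (Nat.le_of_lt_succ hi) with h | rfl
      · rw [Function.update_of_ne (by omega), Function.update_of_ne (by omega)]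
        exact hval i (by omega)
      · rw [Function.update_self, Function.update_self, ← hcd]
    · intro i hi
      rcases Nat.lt_or_eq_of_le (Nat.le_of_lt_succ hi) with h | rfl
      · rw [Function.update_of_ne (by omega), Function.update_of_ne (by omega)]
        exact hhi.trans (hS.arg_hi i hi)
      · rw [Function.update_self, Function.update_self, hcd]
        exact (P a).1 (Nat.lt_succ_self d)
    · intro i hi
      rcases Nat.lt_or_eq_of_le (Nat.le_of_lt_succ hi) with h | rfl
      · rw [Function.update_of_ne (by omega), Function.update_of_ne (by omega),
          Function.update_of_ne (by omega)]
        exact hS.ms_succ i hi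
      · rw [Function.update_self, Function.update_self, Function.update_self, hcd]
    · rw [Function.update_self]
      exact (P 0).2 c
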